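/- arXiv:1606.01986 — 4 statements merged into one kernel-verified Lean document; each statement's English description precedes it below -/
import Mathlib

section
/- For every real number z ≥ 0, the continuous Catalan function satisfies the convolution identity ∫_{0}^{z} C(x) C(z−x) dx = 4 C′(z), where C′ denotes the derivative of C. -/
/-- The one-variable continuous Catalan function `C(x) = 2 I₁(x)/x`. -/
noncomputable def contCatalanFn (x : ℝ) : ℝ :=
  ∑' n : ℕ, (x / 2) ^ (2 * n) / ((n.factorial : ℝ) * ((n + 1).factorial : ℝ))

/-!
Write `x^[k] = x ^ k / k!`. Then `C(x) = ∑ cₙ x^[2n]`, where `cₙ = catalan n / 4 ^ n`. Convolution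
over `[0, z]` sends `x^[j]`, `x^[k]` to `z^[j + k + 1]`, so the Catalan recurrence
`∑_{i + j = n} cᵢ cⱼ = 4 cₙ₊₁` turns the convolution of `C` with itself into
`4 ∑ cₙ₊₁ z^[2n + 1]`, which is `4 C'(z)` by termwise differentiation.
-/

open Finset MeasureTheory
open scoped Nat

theorem hasSum_sum_antidiagonal {A α : Type*} [AddMonoid A] [HasAntidiagonal A]
    [AddCommMonoid α] [TopologicalSpace α] [ContinuousAdd α] [RegularSpace α]
    {f : A × A → α} {s : α} (hf : HasSum f s) :
    HasSum (fun n ↦ ∑ p ∈ antidiagonal n, f p) s :=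
  (HasAntidiagonal.sigmaAntidiagonalEquivProd.hasSum_iff.2 hf).sigma fun n ↦
    (antidiagonal n).hasSum f

theorem hasSum_intervalIntegral_mul_of_norm_le {ι κ R : Type*} [Countable ι] [Countable κ]
    [NormedRing R] [NormedSpace ℝ R] [CompleteSpace R] {μ : Measure ℝ} [IsLocallyFiniteMeasure μ]
    {a b : ℝ} {f : ι → ℝ → R} {g : κ → ℝ → R} {F : ι → ℝ} {G : κ → ℝ}
    (hf : ∀ i, AEStronglyMeasurable (f i) (μ.restrict (Set.uIoc a b)))
    (hg : ∀ j, AEStronglyMeasurable (g j) (μ.restrict (Set.uIoc a b)))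
    (hfF : ∀ i, ∀ x ∈ Set.uIoc a b, ‖f i x‖ ≤ F i) (hgG : ∀ j, ∀ x ∈ Set.uIoc a b, ‖g j x‖ ≤ G j)
    (hF : Summable F) (hG : Summable G) :
    HasSum (fun p : ι × κ ↦ ∫ x in a..b, f p.1 x * g p.2 x ∂μ)
      (∫ x in a..b, (∑' i, f i x) * ∑' j, g j x ∂μ) := by
  have bound_summable : Summable fun p : ι × κ ↦ ‖F p.1‖ * ‖G p.2‖ :=
    hF.norm.mul_of_nonneg hG.norm (fun _ ↦ norm_nonneg _) (fun _ ↦ norm_nonneg _)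
  refine intervalIntegral.hasSum_integral_of_dominated_convergence
    (fun p _ ↦ ‖F p.1‖ * ‖G p.2‖) (fun p ↦ (hf p.1).mul (hg p.2))
    (fun p ↦ .of_forall fun x hx ↦ ?_) (.of_forall fun _ _ ↦ bound_summable)
    intervalIntegrable_const (.of_forall fun x hx ↦ ?_)
  · refine (norm_mul_le _ _).trans ?_
    gcongr
    exacts [(hfF p.1 x hx).trans (le_abs_self _), (hgG p.2 x hx).trans (le_abs_self _)]
  · have hfx : Summable fun i ↦ ‖f i x‖ := hF.of_norm_bounded fun i ↦ by simpa using hfF i x hx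
    have hgx : Summable fun j ↦ ‖g j x‖ := hG.of_norm_bounded fun j ↦ by simpa using hgG j x hx
    rw [tsum_mul_tsum_of_summable_norm hfx hgx]
    exact (summable_mul_of_summable_norm hfx hgx).hasSum

section DividedPow

/-- The divided power `x ^ k / k!`. Differentiation lowers the index `k` by one, and convolution
over `[0, z]` adds the indices plus one, so series in these functions are convenient for both. -/
noncomputable def dividedPow (k : ℕ) (x : ℝ) : ℝ :=
  x ^ k / k !

theorem dividedPow_zero (x : ℝ) : dividedPow 0 x = 1 := by
  simp [dividedPow]

theorem dividedPow_succ_apply_zero (k : ℕ) : dividedPow (k + 1) 0 = 0 := by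
  simp [dividedPow]

theorem abs_dividedPow (k : ℕ) (x : ℝ) : |dividedPow k x| = dividedPow k |x| := by
  simp [dividedPow, abs_div]

theorem norm_mul_dividedPow_le_of_abs_le (c : ℝ) (k : ℕ) {x y : ℝ} (h : |x| ≤ |y|) :
    ‖c * dividedPow k x‖ ≤ ‖c * dividedPow k y‖ := by
  simp only [norm_mul, Real.norm_eq_abs, abs_dividedPow]
  unfold dividedPow
  gcongr

theorem hasDerivAt_dividedPow_succ (k : ℕ) (x : ℝ) :
    HasDerivAt (dividedPow (k + 1)) (dividedPow k x) x := by
  refine ((hasDerivAt_pow (k + 1) x).div_const _).congr_deriv ?_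
  rw [dividedPow, Nat.factorial_succ, Nat.add_sub_cancel]
  push_cast
  field_simp

@[fun_prop]
theorem continuous_dividedPow (k : ℕ) : Continuous (dividedPow k) := by
  unfold dividedPow
  fun_prop

theorem integral_dividedPow (k : ℕ) (z : ℝ) :
    ∫ x in (0 : ℝ)..z, dividedPow k x = dividedPow (k + 1) z := by
  rw [intervalIntegral.integral_eq_sub_of_hasDerivAt
    (fun x _ ↦ hasDerivAt_dividedPow_succ k x)
    ((continuous_dividedPow k).intervalIntegrable _ _), dividedPow_succ_apply_zero, sub_zero]

theorem integral_dividedPow_mul_dividedPow_succ_sub (j k : ℕ) (z : ℝ) :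
    ∫ x in (0 : ℝ)..z, dividedPow j x * dividedPow (k + 1) (z - x) =
      ∫ x in (0 : ℝ)..z, dividedPow (j + 1) x * dividedPow k (z - x) := by
  have by_parts := intervalIntegral.integral_mul_deriv_eq_deriv_mul (a := 0) (b := z)
    (fun x _ ↦ hasDerivAt_dividedPow_succ j x)
    (fun x _ ↦ (hasDerivAt_dividedPow_succ k (z - x)).comp_const_sub z x)
    (Continuous.intervalIntegrable (by fun_prop) _ _)
    (Continuous.intervalIntegrable (by fun_prop) _ _)
  simpa [dividedPow_succ_apply_zero] using by_parts.symm

theorem integral_dividedPow_mul_dividedPow_sub (j k : ℕ) (z : ℝ) :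
    ∫ x in (0 : ℝ)..z, dividedPow j x * dividedPow k (z - x) = dividedPow (j + k + 1) z := by
  induction k generalizing j with
  | zero => simp only [dividedPow_zero, mul_one, integral_dividedPow, add_zero]
  | succ k ih =>
    rw [integral_dividedPow_mul_dividedPow_succ_sub, ih, Nat.add_right_comm j 1 k, add_assoc j k 1]

end DividedPow

section DividedPowSeries

variable {ι κ : Type*} {a : ι → ℝ} {b : κ → ℝ} {d : ι → ℕ} {e : κ → ℕ}

theorem summable_mul_dividedPow_of_abs_le {M : ℝ} (ha : ∀ i, |a i| ≤ M)
    (hd : Function.Injective d) (x : ℝ) : Summable fun i ↦ a i * dividedPow (d i) x := by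
  have exp_subseries : Summable fun i ↦ dividedPow (d i) |x| :=
    (Real.summable_pow_div_factorial |x|).comp_injective hd
  refine (exp_subseries.mul_left M).of_norm_bounded fun i ↦ ?_
  rw [Real.norm_eq_abs, abs_mul, ← abs_dividedPow]
  gcongr
  exact ha i

theorem hasDerivAt_tsum_mul_dividedPow_succ
    (h : ∀ x, Summable fun i ↦ a i * dividedPow (d i) x) (z : ℝ) :
    HasDerivAt (fun x ↦ ∑' i, a i * dividedPow (d i + 1) x)
      (∑' i, a i * dividedPow (d i) z) z := by
  refine hasDerivAt_tsum_of_isPreconnected (h (|z| + 1)).norm Metric.isOpen_ball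
    (convex_ball (0 : ℝ) (|z| + 1)).isPreconnected
    (fun i x _ ↦ (hasDerivAt_dividedPow_succ (d i) x).const_mul (a i)) (fun i x hx ↦ ?_)
    (Metric.mem_ball_self (by positivity)) ?_ (by simp)
  · exact norm_mul_dividedPow_le_of_abs_le _ _
      ((mem_ball_zero_iff.1 hx).le.trans (le_abs_self _))
  · simpa only [dividedPow_succ_apply_zero, mul_zero] using summable_zero

theorem hasSum_convolution_tsum_mul_dividedPow [Countable ι] [Countable κ] {z : ℝ}
    (ha : Summable fun i ↦ a i * dividedPow (d i) z)
    (hb : Summable fun j ↦ b j * dividedPow (e j) z) :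
    HasSum (fun p : ι × κ ↦ a p.1 * b p.2 * dividedPow (d p.1 + e p.2 + 1) z)
      (∫ x in (0 : ℝ)..z,
        (∑' i, a i * dividedPow (d i) x) * ∑' j, b j * dividedPow (e j) (z - x)) := by
  have termwise := hasSum_intervalIntegral_mul_of_norm_le (μ := volume) (a := 0) (b := z)
    (f := fun i x ↦ a i * dividedPow (d i) x) (g := fun j x ↦ b j * dividedPow (e j) (z - x))
    (fun i ↦ Continuous.aestronglyMeasurable (by fun_prop))
    (fun j ↦ Continuous.aestronglyMeasurable (by fun_prop))
    (fun i x hx ↦ norm_mul_dividedPow_le_of_abs_le (a i) (d i) (by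
      simpa using Set.abs_sub_left_of_mem_uIcc (Set.uIoc_subset_uIcc hx)))
    (fun j x hx ↦ norm_mul_dividedPow_le_of_abs_le (b j) (e j) (by
      simpa using Set.abs_sub_right_of_mem_uIcc (Set.uIoc_subset_uIcc hx)))
    ha.norm hb.norm
  have integral_term (i : ι) (j : κ) :
      ∫ x in (0 : ℝ)..z, (a i * dividedPow (d i) x) * (b j * dividedPow (e j) (z - x)) =
        a i * b j * dividedPow (d i + e j + 1) z := by
    simp_rw [mul_mul_mul_comm (a i)]
    rw [intervalIntegral.integral_const_mul, integral_dividedPow_mul_dividedPow_sub]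
  simpa only [integral_term] using termwise

end DividedPowSeries

theorem catalan_mul_factorial_mul_factorial_succ (n : ℕ) :
    catalan n * (n ! * (n + 1)!) = (2 * n)! := by
  calc catalan n * (n ! * (n + 1)!) = (n + 1) * catalan n * n ! * n ! := by
        rw [Nat.factorial_succ]
        ring
    _ = (2 * n)! := by
        rw [succ_mul_catalan_eq_centralBinom, Nat.centralBinom_eq_two_mul_choose, two_mul,
          Nat.add_choose_mul_factorial_mul_factorial]

theorem catalan_le_four_pow (n : ℕ) : catalan n ≤ 4 ^ n := by
  calc catalan n ≤ (n + 1) * catalan n := Nat.le_mul_of_pos_left _ n.succ_pos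
    _ = (2 * n).choose n := by
        rw [succ_mul_catalan_eq_centralBinom, Nat.centralBinom_eq_two_mul_choose]
    _ ≤ 2 ^ (2 * n) := Nat.choose_le_two_pow _ _
    _ = 4 ^ n := by rw [pow_mul, show 2 ^ 2 = 4 from rfl]

/-- The Catalan numbers rescaled by their growth rate, `catalan n / 4 ^ n`: the coefficients of
`contCatalanFn` with respect to the even divided powers. -/
noncomputable def scaledCatalan (n : ℕ) : ℝ :=
  catalan n / 4 ^ n

theorem abs_scaledCatalan_le_one (n : ℕ) : |scaledCatalan n| ≤ 1 := by
  rw [scaledCatalan, abs_of_nonneg (by positivity), div_le_one (by positivity)]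
  exact_mod_cast catalan_le_four_pow n

theorem sum_antidiagonal_scaledCatalan_mul (n : ℕ) :
    ∑ p ∈ antidiagonal n, scaledCatalan p.1 * scaledCatalan p.2 = 4 * scaledCatalan (n + 1) := by
  have pull_out_scale : ∀ p ∈ antidiagonal n, scaledCatalan p.1 * scaledCatalan p.2 =
      (catalan p.1 * catalan p.2 : ℝ) / 4 ^ n := fun p hp ↦ by
    rw [scaledCatalan, scaledCatalan, div_mul_div_comm, ← pow_add, mem_antidiagonal.1 hp]
  rw [sum_congr rfl pull_out_scale, ← sum_div, scaledCatalan, catalan_succ']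
  push_cast
  rw [pow_succ]
  field_simp

theorem summable_scaledCatalan_mul_dividedPow (x : ℝ) :
    Summable fun n ↦ scaledCatalan n * dividedPow (2 * n) x :=
  summable_mul_dividedPow_of_abs_le abs_scaledCatalan_le_one
    (mul_right_injective₀ two_ne_zero) x

theorem summable_scaledCatalan_succ_mul_dividedPow (x : ℝ) :
    Summable fun n ↦ scaledCatalan (n + 1) * dividedPow (2 * n + 1) x :=
  summable_mul_dividedPow_of_abs_le (fun n ↦ abs_scaledCatalan_le_one (n + 1))
    (fun _ _ h ↦ by lia) x

theorem contCatalanFn_eq_tsum_dividedPow (x : ℝ) :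
    contCatalanFn x = ∑' n, scaledCatalan n * dividedPow (2 * n) x := by
  refine tsum_congr fun n ↦ ?_
  have factorial_two_mul : ((2 * n)! : ℝ) = catalan n * (n ! * (n + 1)!) := by
    exact_mod_cast (catalan_mul_factorial_mul_factorial_succ n).symm
  have catalan_ne_zero : (catalan n : ℝ) ≠ 0 :=
    left_ne_zero_of_mul (factorial_two_mul ▸ Nat.cast_ne_zero.2 (2 * n).factorial_ne_zero)
  rw [scaledCatalan, dividedPow, factorial_two_mul, div_pow, pow_mul 2]
  norm_num only
  field_simp

theorem hasDerivAt_contCatalanFn (z : ℝ) :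
    HasDerivAt contCatalanFn
      (∑' n, scaledCatalan (n + 1) * dividedPow (2 * n + 1) z) z := by
  have split_constant_term : contCatalanFn = fun x ↦ scaledCatalan 0 +
      ∑' n, scaledCatalan (n + 1) * dividedPow (2 * n + 1 + 1) x := by
    funext x
    rw [contCatalanFn_eq_tsum_dividedPow,
      (summable_scaledCatalan_mul_dividedPow x).tsum_eq_zero_add, mul_zero, dividedPow_zero,
      mul_one]
    rfl
  rw [split_constant_term]
  exact (hasDerivAt_tsum_mul_dividedPow_succ
    summable_scaledCatalan_succ_mul_dividedPow z).const_add _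

theorem hasSum_convolution_contCatalanFn (z : ℝ) :
    HasSum (fun n ↦ 4 * (scaledCatalan (n + 1) * dividedPow (2 * n + 1) z))
      (∫ x in (0 : ℝ)..z, contCatalanFn x * contCatalanFn (z - x)) := by
  simp only [contCatalanFn_eq_tsum_dividedPow]
  convert hasSum_sum_antidiagonal (hasSum_convolution_tsum_mul_dividedPow
    (summable_scaledCatalan_mul_dividedPow z) (summable_scaledCatalan_mul_dividedPow z))
    using 2 with n
  rw [← mul_assoc, ← sum_antidiagonal_scaledCatalan_mul, sum_mul]
  refine sum_congr rfl fun p hp ↦ ?_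
  rw [← mul_add, mem_antidiagonal.1 hp]

theorem contCatalanFn_convolution_general (z : ℝ) :
    (∫ x in (0 : ℝ)..z, contCatalanFn x * contCatalanFn (z - x)) =
      4 * deriv contCatalanFn z := by
  rw [(hasDerivAt_contCatalanFn z).deriv, ← tsum_mul_left]
  exact (hasSum_convolution_contCatalanFn z).tsum_eq.symm

theorem contCatalanFn_convolution (z : ℝ) (hz : 0 ≤ z) :
    (∫ x in (0 : ℝ)..z, contCatalanFn x * contCatalanFn (z - x)) =
      4 * deriv contCatalanFn z :=
  contCatalanFn_convolution_general z
end

section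
/- For every real number s > 1, the Laplace transform of the continuous Catalan function satisfies ∫_{0}^{∞} C(x) e^{−xs} dx = 2 / (s + √(s² − 1)). -/
/-!
Since `(2n)! / (n! (n+1)!)` is the Catalan number `cₙ`, the function `C(x)` is the exponential
series `∑ cₙ (x/2)²ⁿ / (2n)!`. The Laplace transform sends `xᵈ / d!` to `1 / sᵈ⁺¹`, so it turns `C`
into `c(1/(4s²)) / s`, where `c(z) = ∑ cₙ zⁿ`. The Catalan recursion gives `c = 1 + z c²`, that is
`(1 - 2zc)² = 1 - 4z`, and the bound `|c| ≤ 2` on `|z| ≤ 1/4` shows that `1 - 2zc` is the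
nonnegative square root.
-/

open MeasureTheory Real
open Set (Ioi)
open Finset.HasAntidiagonal (antidiagonal mem_antidiagonal)

theorem catalan_mul_quarter_pow (n : ℕ) :
    (catalan n : ℝ) * (1 / 4) ^ n =
      2 * n.centralBinom * (1 / 4) ^ n - 2 * (n + 1).centralBinom * (1 / 4) ^ (n + 1) := by
  have h_catalan : ((n : ℝ) + 1) * catalan n = n.centralBinom :=
    mod_cast succ_mul_catalan_eq_centralBinom n
  have h_centralBinom : ((n : ℝ) + 1) * (n + 1).centralBinom = 2 * (2 * n + 1) * n.centralBinom :=
    mod_cast Nat.succ_mul_centralBinom_succ n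
  apply mul_left_cancel₀ (n.cast_add_one_ne_zero (R := ℝ))
  linear_combination (1 / 4) ^ n * h_catalan + (1 / 4) ^ n * h_centralBinom / 2

theorem sum_range_catalan_mul_quarter_pow_le_two (N : ℕ) :
    ∑ n ∈ Finset.range N, (catalan n : ℝ) * (1 / 4) ^ n ≤ 2 := by
  simp only [catalan_mul_quarter_pow]
  rw [Finset.sum_range_sub' fun n : ℕ ↦ 2 * (n.centralBinom : ℝ) * (1 / 4) ^ n]
  simp

theorem summable_catalan_mul_quarter_pow :
    Summable fun n : ℕ ↦ (catalan n : ℝ) * (1 / 4) ^ n :=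
  summable_of_sum_range_le (fun _ ↦ by positivity) sum_range_catalan_mul_quarter_pow_le_two

theorem catalan_eq_factorial_div (n : ℕ) :
    (catalan n : ℝ) = (2 * n).factorial / (n.factorial * (n + 1).factorial) := by
  have h_catalan : ((n : ℝ) + 1) * catalan n = n.centralBinom :=
    mod_cast succ_mul_catalan_eq_centralBinom n
  rw [Nat.centralBinom_eq_two_mul_choose, Nat.cast_choose ℝ (Nat.le_mul_of_pos_left n two_pos),
    two_mul, Nat.add_sub_cancel] at h_catalan
  rw [two_mul, Nat.factorial_succ]
  push_cast
  field_simp at h_catalan ⊢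
  linear_combination h_catalan

section CatalanGenFun

variable {A : Type*} [NormedCommRing A]

/-- The ordinary generating function `∑ cₙ zⁿ` of the Catalan numbers, as an analytic function on a
normed ring. It is meaningful for `‖z‖ ≤ 1 / 4`; elsewhere the sum may take the junk value `0`. -/
noncomputable def catalanGenFun (z : A) : A :=
  ∑' n : ℕ, (catalan n : A) * z ^ n

variable [NormOneClass A] {z : A}

theorem norm_catalan_mul_pow_le (hz : ‖z‖ ≤ 1 / 4) (n : ℕ) :
    ‖(catalan n : A) * z ^ n‖ ≤ catalan n * (1 / 4) ^ n := by
  calc ‖(catalan n : A) * z ^ n‖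
      ≤ ‖(catalan n : A)‖ * ‖z ^ n‖ := norm_mul_le _ _
    _ ≤ catalan n * ‖z‖ ^ n := by
      gcongr
      · simpa using Nat.norm_cast_le (α := A) (catalan n)
      · exact norm_pow_le z n
    _ ≤ catalan n * (1 / 4) ^ n := by gcongr

theorem summable_norm_catalan_mul_pow (hz : ‖z‖ ≤ 1 / 4) :
    Summable fun n : ℕ ↦ ‖(catalan n : A) * z ^ n‖ :=
  summable_catalan_mul_quarter_pow.of_nonneg_of_le (fun _ ↦ norm_nonneg _)
    (norm_catalan_mul_pow_le hz)

theorem norm_catalanGenFun_le_two (hz : ‖z‖ ≤ 1 / 4) : ‖catalanGenFun z‖ ≤ 2 :=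
  (tsum_of_norm_bounded summable_catalan_mul_quarter_pow.hasSum (norm_catalan_mul_pow_le hz)).trans
    (Real.tsum_le_of_sum_range_le (fun _ ↦ by positivity) sum_range_catalan_mul_quarter_pow_le_two)

theorem catalanGenFun_eq_one_add_mul_sq [CompleteSpace A] (hz : ‖z‖ ≤ 1 / 4) :
    catalanGenFun z = 1 + z * catalanGenFun z ^ 2 := by
  have h_norm := summable_norm_catalan_mul_pow hz
  have h_coeff (n : ℕ) : (catalan (n + 1) : A) * z ^ (n + 1) =
      z * ∑ p ∈ antidiagonal n, (catalan p.1 * z ^ p.1) * (catalan p.2 * z ^ p.2) := by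
    rw [catalan_succ', Nat.cast_sum, Finset.sum_mul, Finset.mul_sum]
    refine Finset.sum_congr rfl fun p hp ↦ ?_
    rw [← mem_antidiagonal.1 hp]
    push_cast
    ring
  have h_sq : catalanGenFun z ^ 2 =
      ∑' n, ∑ p ∈ antidiagonal n, (catalan p.1 * z ^ p.1) * (catalan p.2 * z ^ p.2) := by
    rw [sq, catalanGenFun,
      tsum_mul_tsum_eq_tsum_sum_antidiagonal_of_summable_norm h_norm h_norm]
  have h_cauchy := (summable_norm_sum_mul_antidiagonal_of_summable_norm h_norm h_norm).of_norm
  rw [h_sq, ← h_cauchy.tsum_mul_left, catalanGenFun, h_norm.of_norm.tsum_eq_zero_add]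
  simp only [h_coeff, catalan_zero, Nat.cast_one, pow_zero, mul_one]

end CatalanGenFun

theorem catalanGenFun_eq_two_div {y : ℝ} (hy : |y| ≤ 1 / 4) :
    catalanGenFun y = 2 / (1 + √(1 - 4 * y)) := by
  set c := catalanGenFun y
  have h_quad : c = 1 + y * c ^ 2 := catalanGenFun_eq_one_add_mul_sq hy
  have h_abs : |y * c| ≤ 1 / 4 * 2 := by
    rw [abs_mul]
    gcongr
    exact norm_catalanGenFun_le_two (z := y) hy
  have h_sqrt : √(1 - 4 * y) = 1 - 2 * (y * c) := by
    rw [show 1 - 4 * y = (1 - 2 * (y * c)) ^ 2 by linear_combination 4 * y * h_quad]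
    exact sqrt_sq (by linarith [le_abs_self (y * c)])
  rw [eq_div_iff (by positivity), h_sqrt]
  linear_combination 2 * h_quad

section Laplace

variable {s : ℝ}

theorem integral_pow_mul_exp_neg_mul_Ioi (hs : 0 < s) (n : ℕ) :
    ∫ x in Ioi (0 : ℝ), x ^ n * exp (-(x * s)) = n.factorial / s ^ (n + 1) := by
  have h := integral_rpow_mul_exp_neg_mul_Ioi n.cast_add_one_pos hs
  simp only [add_sub_cancel_right, rpow_natCast, Gamma_nat_eq_factorial] at h
  rw [← Nat.cast_succ, rpow_natCast] at h
  simp only [mul_comm _ s, h, one_div, inv_pow, Nat.succ_eq_add_one, inv_mul_eq_div]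

theorem integrableOn_pow_mul_exp_neg_mul_Ioi (hs : 0 < s) (n : ℕ) :
    IntegrableOn (fun x : ℝ ↦ x ^ n * exp (-(x * s))) (Ioi 0) :=
  .of_integral_ne_zero (by rw [integral_pow_mul_exp_neg_mul_Ioi hs]; positivity)

theorem integral_const_mul_pow_div_factorial_mul_exp_neg (hs : 0 < s) (a : ℝ) (n : ℕ) :
    ∫ x in Ioi (0 : ℝ), a * (x ^ n / n.factorial) * exp (-(x * s)) = a / s ^ (n + 1) := by
  calc ∫ x in Ioi (0 : ℝ), a * (x ^ n / n.factorial) * exp (-(x * s))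
      = ∫ x in Ioi (0 : ℝ), a / n.factorial * (x ^ n * exp (-(x * s))) := by
        congr with x
        ring
    _ = a / s ^ (n + 1) := by
        rw [integral_const_mul, integral_pow_mul_exp_neg_mul_Ioi hs]
        field_simp

/-- The Laplace transform inverts the Borel transform. The exponents `d i` are arbitrary so that
lacunary series are covered without inserting zero coefficients. -/
theorem integral_tsum_mul_pow_div_factorial_mul_exp_neg {ι : Type*} [Countable ι] (hs : 0 < s)
    {a : ι → ℝ} {d : ι → ℕ} (ha : Summable fun i ↦ |a i| / s ^ (d i + 1)) :
    ∫ x in Ioi (0 : ℝ), (∑' i, a i * (x ^ d i / (d i).factorial)) * exp (-(x * s)) =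
      ∑' i, a i / s ^ (d i + 1) := by
  have h_int (i : ι) : IntegrableOn
      (fun x : ℝ ↦ a i * (x ^ d i / (d i).factorial) * exp (-(x * s))) (Ioi 0) := by
    refine ((integrableOn_pow_mul_exp_neg_mul_Ioi hs (d i)).const_mul
      (a i / (d i).factorial)).congr (.of_forall fun x ↦ ?_)
    ring
  have h_norm (i : ι) : ∫ x in Ioi (0 : ℝ), ‖a i * (x ^ d i / (d i).factorial) * exp (-(x * s))‖ =
      |a i| / s ^ (d i + 1) := by
    rw [← integral_const_mul_pow_div_factorial_mul_exp_neg hs]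
    refine setIntegral_congr_fun measurableSet_Ioi fun x (hx : 0 < x) ↦ ?_
    have h_nonneg : 0 ≤ x ^ d i / (d i).factorial := by positivity
    simp only [norm_mul, norm_eq_abs, abs_of_nonneg h_nonneg, abs_exp]
  simp only [← tsum_mul_right]
  rw [← integral_tsum_of_summable_integral_norm h_int (by simpa only [h_norm] using ha)]
  simp only [integral_const_mul_pow_div_factorial_mul_exp_neg hs]

end Laplace

theorem contCatalanFn_eq_tsum_catalan (x : ℝ) :
    contCatalanFn x =
      ∑' n : ℕ, catalan n * (1 / 4) ^ n * (x ^ (2 * n) / (2 * n).factorial) := by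
  refine tsum_congr fun n ↦ ?_
  have h_two_pow : (2 : ℝ) ^ (2 * n) = 4 ^ n := by rw [pow_mul]; norm_num
  rw [catalan_eq_factorial_div, div_pow, h_two_pow, div_pow, one_pow]
  field_simp

theorem laplace_contCatalanFn_eq_catalanGenFun {s : ℝ} (hs : 1 ≤ s) :
    ∫ x in Ioi (0 : ℝ), contCatalanFn x * exp (-(x * s)) =
      catalanGenFun (1 / (4 * s ^ 2)) / s := by
  have hs_pos : 0 < s := by positivity
  have h_term (n : ℕ) : (catalan n : ℝ) * (1 / 4) ^ n / s ^ (2 * n + 1) =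
      catalan n * (1 / (4 * s ^ 2)) ^ n / s := by
    rw [pow_succ, pow_mul, div_pow, div_pow, mul_pow]
    field_simp
  have h_summable : Summable fun n : ℕ ↦ |(catalan n : ℝ) * (1 / 4) ^ n| / s ^ (2 * n + 1) := by
    refine summable_catalan_mul_quarter_pow.of_nonneg_of_le (fun _ ↦ by positivity) fun n ↦ ?_
    rw [abs_of_nonneg (by positivity)]
    exact div_le_self (by positivity) (one_le_pow₀ hs)
  simp only [contCatalanFn_eq_tsum_catalan]
  rw [integral_tsum_mul_pow_div_factorial_mul_exp_neg hs_pos h_summable]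
  simp only [h_term, tsum_div_const, catalanGenFun]

theorem laplace_contCatalanFn_general {s : ℝ} (hs : 1 ≤ s) :
    ∫ x in Ioi (0 : ℝ), contCatalanFn x * exp (-(x * s)) = 2 / (s + √(s ^ 2 - 1)) := by
  have hs_pos : 0 < s := by positivity
  have h_abs : |1 / (4 * s ^ 2)| ≤ 1 / 4 := by
    rw [abs_of_pos (by positivity)]
    gcongr
    linarith [one_le_pow₀ hs (n := 2)]
  have h_sqrt : √(1 - 4 * (1 / (4 * s ^ 2))) = √(s ^ 2 - 1) / s := by
    calc √(1 - 4 * (1 / (4 * s ^ 2))) = √((s ^ 2 - 1) / s ^ 2) := by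
          congr 1
          field_simp
      _ = √(s ^ 2 - 1) / s := by rw [sqrt_div' _ (sq_nonneg s), sqrt_sq hs_pos.le]
  rw [laplace_contCatalanFn_eq_catalanGenFun hs, catalanGenFun_eq_two_div h_abs, h_sqrt]
  field_simp

theorem laplace_contCatalanFn (s : ℝ) (hs : 1 < s) :
    (∫ x in Set.Ioi (0 : ℝ), contCatalanFn x * Real.exp (-(x * s))) =
      2 / (s + Real.sqrt (s ^ 2 - 1)) :=
  laplace_contCatalanFn_general hs.le
end

section
/- For all real numbers s ≥ 0 and p > 0, the Laplace transform of the continuous binomial coefficient in its upper argument satisfies ∫_{0}^{∞} e^{−pw} {s+w choose s} dw = e^{s/p} ((p+1)/p)² − 1. -/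
/-- The continuous binomial coefficient `{x choose s}`. -/
noncomputable def cbinom (x s : ℝ) : ℝ :=
  ∑' n : ℕ, (s * (x - s)) ^ n *
    (2 / ((n.factorial : ℝ)) ^ 2 + x / ((n.factorial : ℝ) * ((n + 1).factorial : ℝ)))

/-!
In terms of the Bessel–Clifford functions `C_k(z) = ∑ zⁿ / (n! (n + k)!)` one has
`{s + w choose s} = 2 C₀(s w) + s C₁(s w) + w C₁(s w)`. Since `w ^ n` has Laplace transform
`n! / p ^ (n + 1)`, transforming term by term cancels one of the two factorials and leaves an
exponential series in `s / p`: the three summands contribute `2 e^{s/p} / p`, `e^{s/p} - 1` and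
`e^{s/p} / p²`.
-/

open Complex MeasureTheory Set
open scoped Nat

theorem integrable_tsum_of_summable_integral_norm {α E ι : Type*} [MeasurableSpace α]
    {μ : Measure α} [NormedAddCommGroup E] [CompleteSpace E] [SecondCountableTopology E]
    [MeasurableSpace E] [BorelSpace E] [Countable ι] {F : ι → α → E}
    (hF : ∀ i, Integrable (F i) μ) (hsum : Summable fun i ↦ ∫ a, ‖F i a‖ ∂μ) :
    Integrable (fun a ↦ ∑' i, F i a) μ := by
  have hmeas (i : ι) : AEMeasurable (F i) μ := (hF i).aemeasurable
  refine ⟨(AEMeasurable.tsum hmeas).aestronglyMeasurable, ?_⟩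
  calc ∫⁻ a, ‖∑' i, F i a‖ₑ ∂μ
      ≤ ∫⁻ a, ∑' i, ‖F i a‖ₑ ∂μ := lintegral_mono fun a ↦ enorm_tsum_le_tsum_enorm
    _ = ∑' i, ∫⁻ a, ‖F i a‖ₑ ∂μ := lintegral_tsum fun i ↦ (hmeas i).enorm
    _ = ∑' i, ENNReal.ofReal (∫ a, ‖F i a‖ ∂μ) := by
      simp only [ofReal_integral_norm_eq_lintegral_enorm (hF _)]
    _ < ⊤ := hsum.tsum_ofReal_lt_top

section LaplaceTransform

/-- The Laplace integral `∫₀^∞ e^{-pw} f(w) dw` converges absolutely and has the value `L`. -/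
structure HasLaplaceTransform (f : ℝ → ℂ) (p L : ℂ) : Prop where
  integrableOn : IntegrableOn (fun w : ℝ ↦ cexp (-(p * w)) * f w) (Ioi 0)
  integral_eq : ∫ w in Ioi (0 : ℝ), cexp (-(p * w)) * f w = L

variable {f g : ℝ → ℂ} {p L M : ℂ}

theorem HasLaplaceTransform.add (hf : HasLaplaceTransform f p L) (hg : HasLaplaceTransform g p M) :
    HasLaplaceTransform (fun w ↦ f w + g w) p (L + M) := by
  constructor <;> simp only [mul_add]
  · exact hf.integrableOn.add hg.integrableOn
  · rw [integral_add hf.integrableOn hg.integrableOn, hf.integral_eq, hg.integral_eq]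

theorem HasLaplaceTransform.const_mul (c : ℂ) (hf : HasLaplaceTransform f p L) :
    HasLaplaceTransform (fun w ↦ c * f w) p (c * L) := by
  constructor <;> simp only [mul_left_comm _ c]
  · exact hf.integrableOn.const_mul c
  · rw [integral_const_mul, hf.integral_eq]

theorem HasLaplaceTransform.tsum {ι : Type*} [Countable ι] {f : ι → ℝ → ℂ} {L : ι → ℂ}
    (hf : ∀ i, HasLaplaceTransform (f i) p (L i))
    (hsum : Summable fun i ↦ ∫ w in Ioi (0 : ℝ), ‖cexp (-(p * w)) * f i w‖) (hL : HasSum L M) :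
    HasLaplaceTransform (fun w ↦ ∑' i, f i w) p M := by
  have hint := fun i ↦ (hf i).integrableOn
  have hval := hasSum_integral_of_summable_integral_norm hint hsum
  simp only [(hf _).integral_eq] at hval
  constructor <;> simp only [← tsum_mul_left]
  · exact integrable_tsum_of_summable_integral_norm hint hsum
  · exact hval.unique hL

theorem integral_norm_cexp_neg_mul_mul_pow (hp : 0 < p.re) (n : ℕ) :
    ∫ w in Ioi (0 : ℝ), ‖cexp (-(p * w)) * (w : ℂ) ^ n‖ = n ! / p.re ^ (n + 1) := by
  calc ∫ w in Ioi (0 : ℝ), ‖cexp (-(p * w)) * (w : ℂ) ^ n‖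
      = ∫ w in Ioi (0 : ℝ), w ^ ((n + 1 : ℝ) - 1) * Real.exp (-(p.re * w)) := by
        refine setIntegral_congr_fun measurableSet_Ioi fun w (hw : 0 < w) ↦ ?_
        simp [norm_exp, abs_of_pos hw, mul_comm]
    _ = (1 / p.re) ^ (n + 1 : ℝ) * Real.Gamma (n + 1) :=
        Real.integral_rpow_mul_exp_neg_mul_Ioi (by positivity) hp
    _ = n ! / p.re ^ (n + 1) := by
        rw [Real.Gamma_nat_eq_factorial, ← Nat.cast_add_one, Real.rpow_natCast, one_div_pow,
          one_div_mul_eq_div]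

theorem integrableOn_cexp_neg_mul_mul_pow (hp : 0 < p.re) (n : ℕ) :
    IntegrableOn (fun w : ℝ ↦ cexp (-(p * w)) * (w : ℂ) ^ n) (Ioi 0) := by
  have hmeas : AEStronglyMeasurable (fun w : ℝ ↦ cexp (-(p * w)) * (w : ℂ) ^ n)
      (volume.restrict (Ioi 0)) := by fun_prop
  refine (integrable_norm_iff hmeas).1 (.of_integral_ne_zero ?_)
  rw [integral_norm_cexp_neg_mul_mul_pow hp]
  positivity

theorem integral_cexp_neg_mul_mul_pow_succ (hp : 0 < p.re) (n : ℕ) :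
    p * ∫ w in Ioi (0 : ℝ), cexp (-(p * w)) * (w : ℂ) ^ (n + 1) =
      (n + 1) * ∫ w in Ioi (0 : ℝ), cexp (-(p * w)) * (w : ℂ) ^ n := by
  have hint := integrableOn_cexp_neg_mul_mul_pow hp
  have hderiv (w : ℝ) : HasDerivAt (fun w : ℝ ↦ cexp (-(p * w)) * (w : ℂ) ^ (n + 1))
      ((n + 1) * (cexp (-(p * w)) * (w : ℂ) ^ n) - p * (cexp (-(p * w)) * (w : ℂ) ^ (n + 1)))
      w := by
    have hexp : HasDerivAt (fun z : ℂ ↦ cexp (-(p * z))) (cexp (-(p * w)) * -(p * 1)) w :=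
      ((hasDerivAt_id _).const_mul p).neg.cexp
    convert! (hexp.mul (hasDerivAt_pow (n + 1) (w : ℂ))).comp_ofReal using 1
    push_cast
    ring
  have hderiv_int := ((hint n).const_mul (n + 1 : ℂ)).sub ((hint (n + 1)).const_mul p)
  have hlim := tendsto_zero_of_hasDerivAt_of_integrableOn_Ioi (fun w _ ↦ hderiv w)
    hderiv_int (hint (n + 1))
  have hparts := integral_Ioi_of_hasDerivAt_of_tendsto' (fun w _ ↦ hderiv w) hderiv_int hlim
  rw [integral_sub ((hint n).const_mul _) ((hint (n + 1)).const_mul _), integral_const_mul,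
    integral_const_mul] at hparts
  exact (sub_eq_zero.1 (by simpa using hparts)).symm

theorem hasLaplaceTransform_pow (hp : 0 < p.re) (n : ℕ) :
    HasLaplaceTransform (fun w ↦ (w : ℂ) ^ n) p (n ! / p ^ (n + 1)) := by
  have hp0 : p ≠ 0 := ne_zero_of_re_pos hp
  refine ⟨integrableOn_cexp_neg_mul_mul_pow hp n, ?_⟩
  induction n with
  | zero =>
    have hneg : (-p).re < 0 := by simpa using hp
    simpa [neg_div_neg_eq] using integral_exp_mul_complex_Ioi hneg 0
  | succ n ih =>
    refine mul_left_cancel₀ hp0 ?_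
    rw [integral_cexp_neg_mul_mul_pow_succ hp, ih, Nat.factorial_succ]
    push_cast
    field_simp
    ring

theorem hasLaplaceTransform_tsum_mul_pow {ι : Type*} [Countable ι] {c : ι → ℂ} {e : ι → ℕ}
    (hp : 0 < p.re) (hc : Summable fun i ↦ ‖c i‖ * ((e i)! / p.re ^ (e i + 1)))
    (hL : HasSum (fun i ↦ c i * ((e i)! / p ^ (e i + 1))) L) :
    HasLaplaceTransform (fun w ↦ ∑' i, c i * (w : ℂ) ^ e i) p L := by
  refine .tsum (fun i ↦ (hasLaplaceTransform_pow hp (e i)).const_mul (c i)) ?_ hL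
  simpa only [mul_left_comm _ (c _), norm_mul (c _), integral_const_mul,
    integral_norm_cexp_neg_mul_mul_pow hp] using hc

end LaplaceTransform

section BesselClifford

/-- The Bessel–Clifford function `C_k(z) = ∑ zⁿ / (n! (n + k)!)`, the entire function with
`I_k(2 √z) = z ^ (k / 2) C_k(z)`, where `I_k` is the modified Bessel function. -/
noncomputable def besselClifford (k : ℕ) (z : ℂ) : ℂ :=
  ∑' n : ℕ, z ^ n / (n ! * (n + k)!)

theorem summable_besselClifford (k : ℕ) (z : ℂ) :
    Summable fun n : ℕ ↦ z ^ n / (n ! * (n + k)! : ℂ) := by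
  refine .of_norm_bounded (Real.summable_pow_div_factorial ‖z‖) fun n ↦ ?_
  have hfact : (1 : ℝ) ≤ (n + k)! := mod_cast (n + k).factorial_pos
  simp only [norm_div, norm_pow, norm_mul, norm_natCast]
  gcongr
  exact le_mul_of_one_le_right (by positivity) hfact

theorem hasSum_pow_div_factorial (z : ℂ) : HasSum (fun n : ℕ ↦ z ^ n / n !) (cexp z) := by
  rw [exp_eq_exp_ℂ]
  exact NormedSpace.expSeries_div_hasSum_exp z

variable {p : ℂ}

theorem hasLaplaceTransform_pow_mul_besselClifford (hp : 0 < p.re) (s : ℂ) (k : ℕ) :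
    HasLaplaceTransform (fun w ↦ (w : ℂ) ^ k * besselClifford k (s * w)) p
      (cexp (s / p) / p ^ (k + 1)) := by
  have hp0 : p ≠ 0 := ne_zero_of_re_pos hp
  have hseries (w : ℝ) : (w : ℂ) ^ k * besselClifford k (s * w) =
      ∑' n : ℕ, s ^ n / (n ! * (n + k)!) * (w : ℂ) ^ (n + k) := by
    rw [besselClifford, ← tsum_mul_left]
    exact tsum_congr fun n ↦ by ring
  simp only [hseries]
  refine hasLaplaceTransform_tsum_mul_pow hp ?_ ?_
  · refine ((Real.summable_pow_div_factorial (‖s‖ / p.re)).div_const (p.re ^ (k + 1))).congr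
      fun n ↦ ?_
    simp only [norm_div, norm_pow, norm_mul, norm_natCast, div_pow]
    field_simp
    ring
  · convert! (hasSum_pow_div_factorial (s / p)).div_const (p ^ (k + 1)) using 2 with n
    have hfact : ((n + k)! : ℂ) ≠ 0 := mod_cast (n + k).factorial_ne_zero
    rw [div_pow]
    field_simp
    ring

theorem hasLaplaceTransform_const_pow_mul_besselClifford (hp : 0 < p.re) (s : ℂ) (k : ℕ) :
    HasLaplaceTransform (fun w ↦ s ^ k * besselClifford k (s * w)) p
      (p ^ k / p * (cexp (s / p) - ∑ i ∈ Finset.range k, (s / p) ^ i / i !)) := by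
  have hp0 : p ≠ 0 := ne_zero_of_re_pos hp
  have hseries (w : ℝ) : s ^ k * besselClifford k (s * w) =
      ∑' n : ℕ, s ^ (n + k) / (n ! * (n + k)!) * (w : ℂ) ^ n := by
    rw [besselClifford, ← tsum_mul_left]
    exact tsum_congr fun n ↦ by ring
  simp only [hseries]
  refine hasLaplaceTransform_tsum_mul_pow hp ?_ ?_
  · refine (((summable_nat_add_iff k).2 (Real.summable_pow_div_factorial (‖s‖ / p.re))).mul_left
      (p.re ^ k / p.re)).congr fun n ↦ ?_
    simp only [norm_div, norm_pow, norm_mul, norm_natCast, div_pow]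
    field_simp
    ring
  · convert! ((hasSum_nat_add_iff' k).2 (hasSum_pow_div_factorial (s / p))).mul_left
      (p ^ k / p) using 2 with n
    have hfact : (n ! : ℂ) ≠ 0 := mod_cast n.factorial_ne_zero
    rw [div_pow]
    field_simp
    ring

end BesselClifford

theorem ofReal_cbinom (x s : ℝ) :
    (cbinom x s : ℂ) =
      2 * besselClifford 0 (s * (x - s)) + x * besselClifford 1 (s * (x - s)) := by
  simp only [cbinom, besselClifford, ofReal_tsum, ← tsum_mul_left]
  rw [← ((summable_besselClifford 0 _).mul_left _).tsum_add
    ((summable_besselClifford 1 _).mul_left _)]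
  refine tsum_congr fun n ↦ ?_
  push_cast [add_zero]
  ring

theorem laplace_cbinom_general (s : ℝ) {p : ℂ} (hp : 0 < p.re) :
    HasLaplaceTransform (fun w ↦ (cbinom (s + w) s : ℂ)) p
      (cexp (s / p) * ((p + 1) / p) ^ 2 - 1) := by
  have hp0 : p ≠ 0 := ne_zero_of_re_pos hp
  have hC₀ := (hasLaplaceTransform_pow_mul_besselClifford hp s 0).const_mul 2
  have hsC₁ := hasLaplaceTransform_const_pow_mul_besselClifford hp s 1
  have hwC₁ := hasLaplaceTransform_pow_mul_besselClifford hp s 1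
  convert (hC₀.add hsC₁).add hwC₁ using 1
  · funext w
    rw [ofReal_cbinom, ofReal_add, add_sub_cancel_left]
    ring
  · simp only [Finset.sum_range_one, pow_zero, Nat.factorial_zero, Nat.cast_one]
    field_simp
    ring

theorem laplace_cbinom (s p : ℝ) (hs : 0 ≤ s) (hp : 0 < p) :
    (∫ w in Set.Ioi (0 : ℝ), Real.exp (-(p * w)) * cbinom (s + w) s) =
      Real.exp (s / p) * ((p + 1) / p) ^ 2 - 1 := by
  exact_mod_cast (laplace_cbinom_general s (p := p) hp).integral_eq
end

section
/- For every real number s ≥ 0, the continuous central binomial coefficients satisfy the convolution identity ∫_{0}^{s} {2u choose u} {2(s−u) choose s−u} du = 4 e^{2s} − 2 {2s choose s}. -/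
/-!
Write `aₙ = n.choose (n / 2)`. Splitting a series over `n` into its even and odd terms shows that
`{2s choose s} = 2 ∑ₙ aₙ sⁿ / n!`. The integral of `uⁱ / i! * (s - u)ʲ / j!` over `[0, s]` is
`sⁱ⁺ʲ⁺¹ / (i + j + 1)!`, so convolving exponential generating functions amounts to multiplying the
*ordinary* generating functions of their coefficients and shifting by one. The claim is thus the
coefficientwise form of `X A² + A = 1 / (1 - 2X)` for `A = ∑ₙ aₙ Xⁿ`, and this quadratic equation
follows from `1 + 2 X A = (1 + 2X) S(X²)`, where `S = ∑ₙ (2n choose n) Xⁿ` satisfies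
`S² (1 - 4X) = 1`.
-/

open Finset MeasureTheory
open scoped Nat

/-- The middle (largest) binomial coefficient `n.choose (n / 2)`. -/
def middleBinom (n : ℕ) : ℕ :=
  n.choose (n / 2)

theorem middleBinom_two_mul (n : ℕ) : middleBinom (2 * n) = n.centralBinom := by
  rw [middleBinom, Nat.mul_div_cancel_left n two_pos, Nat.centralBinom_eq_two_mul_choose]

theorem middleBinom_two_mul_add_one (n : ℕ) :
    middleBinom (2 * n + 1) = (2 * n + 1).choose n := by
  rw [middleBinom]
  congr 1
  lia

theorem two_mul_middleBinom_two_mul_add_one (n : ℕ) :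
    2 * middleBinom (2 * n + 1) = (n + 1).centralBinom := by
  rw [middleBinom_two_mul_add_one, Nat.centralBinom_eq_two_mul_choose, mul_add_one,
    Nat.choose_succ_succ, Nat.choose_symm_half, two_mul]

theorem middleBinom_le_two_pow (n : ℕ) : middleBinom n ≤ 2 ^ n :=
  Nat.choose_le_two_pow n (n / 2)

section GeneratingFunctions

open PowerSeries

/-- The ordinary generating function of the central binomial coefficients `(2n choose n)`, with
integer coefficients so that power series can be subtracted. -/
noncomputable def centralBinomSeries : ℤ⟦X⟧ :=
  mk fun n ↦ (n.centralBinom : ℤ)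

theorem one_sub_four_X_mul_derivative_centralBinomSeries :
    (1 - 4 * X) * d⁄dX ℤ centralBinomSeries = 2 * centralBinomSeries := by
  rw [sub_mul, one_mul, mul_assoc, ← map_ofNat C 4, ← map_ofNat C 2]
  ext n
  rw [map_sub, coeff_C_mul, coeff_C_mul, coeff_derivative]
  cases n with
  | zero => simp [centralBinomSeries, Nat.centralBinom_eq_two_mul_choose]
  | succ n =>
    have recurrence : ((n : ℤ) + 2) * (n + 2).centralBinom =
        2 * (2 * (n + 1) + 1) * (n + 1).centralBinom :=
      mod_cast Nat.succ_mul_centralBinom_succ (n + 1)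
    simp only [coeff_succ_X_mul, coeff_derivative, centralBinomSeries, coeff_mk]
    push_cast
    linear_combination recurrence

theorem centralBinomSeries_sq_mul_one_sub_four_X :
    centralBinomSeries ^ 2 * (1 - 4 * X) = 1 := by
  apply derivative.ext
  · have derivative_one_sub_four_X : d⁄dX ℤ (1 - 4 * X) = -4 := by
      rw [← map_ofNat C 4, map_sub, Derivation.leibniz, derivative_C, derivative_X]
      simp
    rw [Derivation.leibniz, derivative_pow, derivative_one_sub_four_X, Derivation.map_one_eq_zero]
    simp only [smul_eq_mul, Nat.cast_ofNat, Nat.add_one_sub_one, pow_one]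
    linear_combination
      2 * centralBinomSeries * one_sub_four_X_mul_derivative_centralBinomSeries
  · have constantCoeff_centralBinomSeries : constantCoeff centralBinomSeries = 1 := by
      rw [centralBinomSeries, constantCoeff_mk, Nat.centralBinom_zero, Nat.cast_one]
    simp [constantCoeff_centralBinomSeries]

/-- The ordinary generating function of the middle binomial coefficients. -/
noncomputable def middleBinomSeries : ℤ⟦X⟧ :=
  mk fun n ↦ (middleBinom n : ℤ)

theorem one_add_two_X_mul_middleBinomSeries :
    1 + 2 * X * middleBinomSeries =
      (1 + 2 * X) * expand 2 two_ne_zero centralBinomSeries := by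
  rw [add_mul, one_mul, mul_assoc, mul_assoc, ← map_ofNat C 2]
  ext n
  rw [map_add, map_add, coeff_C_mul, coeff_C_mul]
  cases n with
  | zero => simp [centralBinomSeries]
  | succ n =>
    rw [coeff_one, if_neg n.succ_ne_zero, zero_add, coeff_succ_X_mul, coeff_succ_X_mul]
    obtain ⟨k, rfl | rfl⟩ := n.even_or_odd'
    · rw [coeff_expand_of_not_dvd 2 _ _ (by lia : ¬ 2 ∣ 2 * k + 1), coeff_expand_mul, zero_add]
      simp only [middleBinomSeries, centralBinomSeries, coeff_mk, middleBinom_two_mul]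
    · rw [coeff_expand_of_not_dvd 2 _ _ (by lia : ¬ 2 ∣ 2 * k + 1), mul_zero, add_zero,
        show 2 * k + 1 + 1 = 2 * (k + 1) by ring, coeff_expand_mul]
      simp only [middleBinomSeries, centralBinomSeries, coeff_mk]
      simpa using congrArg (Nat.cast (R := ℤ)) (two_mul_middleBinom_two_mul_add_one k)

theorem one_sub_two_X_mul_one_add_two_X_mul_middleBinomSeries_sq :
    (1 - 2 * X) * (1 + 2 * X * middleBinomSeries) ^ 2 = 1 + 2 * X := by
  have expand_sq : expand 2 two_ne_zero centralBinomSeries ^ 2 * (1 - 4 * X ^ 2) = 1 := by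
    simpa [map_ofNat] using
      congrArg (expand 2 two_ne_zero) centralBinomSeries_sq_mul_one_sub_four_X
  rw [one_add_two_X_mul_middleBinomSeries]
  linear_combination (1 + 2 * X) * expand_sq

theorem X_mul_middleBinomSeries_sq_add_middleBinomSeries :
    X * middleBinomSeries ^ 2 + middleBinomSeries = PowerSeries.mk fun n ↦ (2 : ℤ) ^ n := by
  have geometric : (1 - 2 * X) * (PowerSeries.mk fun n ↦ (2 : ℤ) ^ n) = 1 := by
    simpa [rescale_mk, rescale_X, mul_comm] using
      congrArg (rescale (2 : ℤ)) (mk_one_mul_one_sub_eq_one ℤ)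
  have four_ne_zero : (4 : ℤ⟦X⟧) ≠ 0 := fun h ↦ by
    simpa [map_ofNat] using congrArg constantCoeff h
  refine mul_left_cancel₀ (mul_ne_zero (mul_ne_zero four_ne_zero X_ne_zero)
    (left_ne_zero_of_mul_eq_one geometric)) ?_
  linear_combination one_sub_two_X_mul_one_add_two_X_mul_middleBinomSeries_sq -
    4 * X * geometric

theorem sum_antidiagonal_middleBinom_mul_add_middleBinom_succ (n : ℕ) :
    ∑ p ∈ antidiagonal n, middleBinom p.1 * middleBinom p.2 + middleBinom (n + 1) =
      2 ^ (n + 1) := by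
  have coeff_eq := congrArg (coeff (n + 1)) X_mul_middleBinomSeries_sq_add_middleBinomSeries
  rw [map_add, coeff_succ_X_mul, sq, coeff_mul] at coeff_eq
  simp only [middleBinomSeries, coeff_mk] at coeff_eq
  exact_mod_cast coeff_eq

end GeneratingFunctions

theorem hasDerivAt_pow_succ_div_factorial (n : ℕ) (x : ℝ) :
    HasDerivAt (fun x : ℝ ↦ x ^ (n + 1) / (n + 1)!) (x ^ n / n !) x := by
  convert! (hasDerivAt_pow (n + 1) x).div_const ((n + 1)! : ℝ) using 1
  rw [Nat.factorial_succ]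
  push_cast
  field_simp

theorem integral_pow_div_factorial_mul_sub_pow_div_factorial (s : ℝ) (i j : ℕ) :
    ∫ u in (0 : ℝ)..s, u ^ i / i ! * ((s - u) ^ j / j !) =
      s ^ (i + j + 1) / (i + j + 1)! := by
  induction j generalizing i with
  | zero =>
    simpa using intervalIntegral.integral_eq_sub_of_hasDerivAt
      (fun u _ ↦ hasDerivAt_pow_succ_div_factorial i u)
      (Continuous.intervalIntegrable (by fun_prop) 0 s)
  | succ j ih =>
    have hasDerivAt_sub_pow (x : ℝ) : HasDerivAt (fun u : ℝ ↦ (s - u) ^ (j + 1) / (j + 1)!)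
        (-((s - x) ^ j / j !)) x :=
      (hasDerivAt_pow_succ_div_factorial j (s - x)).comp_const_sub s x
    have by_parts := intervalIntegral.integral_deriv_mul_eq_sub
      (fun x _ ↦ hasDerivAt_pow_succ_div_factorial i x) (fun x _ ↦ hasDerivAt_sub_pow x)
      (Continuous.intervalIntegrable (by fun_prop) 0 s)
      (Continuous.intervalIntegrable (by fun_prop) 0 s)
    rw [show i + (j + 1) + 1 = i + 1 + j + 1 by ring, ← ih (i + 1), ← sub_eq_zero,
      ← intervalIntegral.integral_sub (Continuous.intervalIntegrable (by fun_prop) 0 s)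
        (Continuous.intervalIntegrable (by fun_prop) 0 s)]
    simpa [sub_eq_add_neg] using by_parts

/-- The `n`-th term `aₙ xⁿ / n!` of the exponential generating function of a sequence `a`. -/
noncomputable def expGenTerm {E : Type*} [SMul ℝ E] (a : ℕ → E) (x : ℝ) (n : ℕ) : E :=
  (x ^ n / n ! : ℝ) • a n

/-- The exponential generating function `∑ aₙ xⁿ / n!` of a sequence `a`, as a function of a real
variable; its value is the junk value `0` where the series is not summable. -/
noncomputable def expGenFun {E : Type*} [AddCommMonoid E] [SMul ℝ E] [TopologicalSpace E]
    (a : ℕ → E) (x : ℝ) : E :=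
  ∑' n, expGenTerm a x n

section NormedSpace

variable {E : Type*} [SeminormedAddCommGroup E] [NormedSpace ℝ E] {a : ℕ → E} {s t : ℝ}

theorem continuous_expGenTerm (a : ℕ → E) (n : ℕ) : Continuous fun x ↦ expGenTerm a x n := by
  unfold expGenTerm
  fun_prop

theorem norm_expGenTerm_le_of_abs_le (a : ℕ → E) (hts : |t| ≤ |s|) (n : ℕ) :
    ‖expGenTerm a t n‖ ≤ ‖expGenTerm a s n‖ := by
  simp only [expGenTerm, norm_smul, norm_div, norm_pow, Real.norm_eq_abs]
  gcongr

theorem summable_norm_expGenTerm_of_abs_le (ha : Summable fun n ↦ ‖expGenTerm a s n‖)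
    (hts : |t| ≤ |s|) : Summable fun n ↦ ‖expGenTerm a t n‖ :=
  ha.of_nonneg_of_le (fun _ ↦ norm_nonneg _) (norm_expGenTerm_le_of_abs_le a hts)

end NormedSpace

section NormedAlgebra

variable {A : Type*} [NormedRing A] [NormedAlgebra ℝ A] [CompleteSpace A]

theorem integral_sum_antidiagonal_expGenTerm_mul (a b : ℕ → A) (s : ℝ) (n : ℕ) :
    ∫ u in (0 : ℝ)..s, ∑ p ∈ antidiagonal n, expGenTerm a u p.1 * expGenTerm b (s - u) p.2 =
      (s ^ (n + 1) / (n + 1)! : ℝ) • ∑ p ∈ antidiagonal n, a p.1 * b p.2 := by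
  unfold expGenTerm
  rw [intervalIntegral.integral_finsetSum
    fun p _ ↦ Continuous.intervalIntegrable (by fun_prop) _ _, smul_sum]
  refine sum_congr rfl fun p hp ↦ ?_
  simp only [smul_mul_smul_comm]
  rw [intervalIntegral.integral_smul_const,
    integral_pow_div_factorial_mul_sub_pow_div_factorial, mem_antidiagonal.mp hp]

theorem hasSum_integral_expGenFun_mul_expGenFun_sub {a b : ℕ → A} {s : ℝ}
    (ha : Summable fun n ↦ ‖expGenTerm a s n‖) (hb : Summable fun n ↦ ‖expGenTerm b s n‖) :
    HasSum (fun n ↦ (s ^ (n + 1) / (n + 1)! : ℝ) • ∑ p ∈ antidiagonal n, a p.1 * b p.2)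
      (∫ u in (0 : ℝ)..s, expGenFun a u * expGenFun b (s - u)) := by
  have abs_le {u : ℝ} (hu : u ∈ Set.uIoc 0 s) : |u| ≤ |s| := by
    simpa using Set.abs_sub_left_of_mem_uIcc (Set.uIoc_subset_uIcc hu)
  have abs_sub_le {u : ℝ} (hu : u ∈ Set.uIoc 0 s) : |s - u| ≤ |s| := by
    simpa using Set.abs_sub_right_of_mem_uIcc (Set.uIoc_subset_uIcc hu)
  simp only [← integral_sum_antidiagonal_expGenTerm_mul]
  refine intervalIntegral.hasSum_integral_of_dominated_convergence
    (fun n _ ↦ ∑ p ∈ antidiagonal n, ‖expGenTerm a s p.1‖ * ‖expGenTerm b s p.2‖)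
    (fun n ↦ ?measurable) (fun n ↦ ae_of_all _ fun u hu ↦ ?bound)
    (ae_of_all _ fun _ _ ↦ ?summable_bound) intervalIntegrable_const
    (ae_of_all _ fun u hu ↦ ?pointwise)
  case measurable =>
    have continuous_left := continuous_expGenTerm a
    have continuous_right (m : ℕ) : Continuous fun u ↦ expGenTerm b (s - u) m :=
      (continuous_expGenTerm b m).comp (continuous_sub_left s)
    exact Continuous.aestronglyMeasurable (by fun_prop)
  case bound =>
    refine norm_sum_le_of_le _ fun p _ ↦ (norm_mul_le _ _).trans ?_
    exact mul_le_mul (norm_expGenTerm_le_of_abs_le a (abs_le hu) _)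
      (norm_expGenTerm_le_of_abs_le b (abs_sub_le hu) _) (norm_nonneg _) (norm_nonneg _)
  case summable_bound =>
    exact summable_sum_mul_antidiagonal_of_summable_mul
      (f := fun n ↦ ‖expGenTerm a s n‖) (g := fun n ↦ ‖expGenTerm b s n‖)
      (ha.mul_of_nonneg hb (fun _ ↦ norm_nonneg _) fun _ ↦ norm_nonneg _)
  case pointwise =>
    have summable_left := summable_norm_expGenTerm_of_abs_le ha (abs_le hu)
    have summable_right := summable_norm_expGenTerm_of_abs_le hb (abs_sub_le hu)
    rw [expGenFun, expGenFun,
      tsum_mul_tsum_eq_tsum_sum_antidiagonal_of_summable_norm summable_left summable_right]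
    exact (summable_norm_sum_mul_antidiagonal_of_summable_norm
      summable_left summable_right).of_norm.hasSum

end NormedAlgebra

theorem summable_norm_expGenTerm_middleBinom (x : ℝ) :
    Summable fun n ↦ ‖expGenTerm (fun n ↦ (middleBinom n : ℝ)) x n‖ := by
  refine (Real.summable_pow_div_factorial (2 * |x|)).of_nonneg_of_le
    (fun _ ↦ norm_nonneg _) fun n ↦ ?_
  have middleBinom_le : (middleBinom n : ℝ) ≤ 2 ^ n := mod_cast middleBinom_le_two_pow n
  calc ‖expGenTerm (fun n ↦ (middleBinom n : ℝ)) x n‖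
      = |x| ^ n / n ! * middleBinom n := by simp [expGenTerm]
    _ ≤ |x| ^ n / n ! * 2 ^ n := by gcongr
    _ = (2 * |x|) ^ n / n ! := by ring

theorem middleBinom_two_mul_div_factorial (n : ℕ) :
    (middleBinom (2 * n) : ℝ) / (2 * n)! = 1 / (n ! : ℝ) ^ 2 := by
  rw [middleBinom_two_mul, Nat.centralBinom_eq_two_mul_choose, two_mul, Nat.cast_add_choose]
  field_simp

theorem middleBinom_two_mul_add_one_div_factorial (n : ℕ) :
    (middleBinom (2 * n + 1) : ℝ) / (2 * n + 1)! = 1 / ((n ! : ℝ) * (n + 1)!) := by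
  rw [middleBinom_two_mul_add_one, two_mul, add_assoc, Nat.cast_add_choose]
  field_simp

theorem cbinom_two_mul_self (x : ℝ) :
    cbinom (2 * x) x = 2 * expGenFun (fun n ↦ (middleBinom n : ℝ)) x := by
  have summable_terms := (summable_norm_expGenTerm_middleBinom x).of_norm
  have summable_even : Summable fun n ↦ expGenTerm (fun n ↦ (middleBinom n : ℝ)) x (2 * n) :=
    summable_terms.comp_injective fun _ _ h ↦ by lia
  have summable_odd : Summable fun n ↦ expGenTerm (fun n ↦ (middleBinom n : ℝ)) x (2 * n + 1) :=
    summable_terms.comp_injective fun _ _ h ↦ by lia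
  rw [expGenFun, ← tsum_even_add_odd summable_even summable_odd,
    ← summable_even.tsum_add summable_odd, ← tsum_mul_left]
  refine tsum_congr fun n ↦ ?_
  calc (x * (2 * x - x)) ^ n * (2 / (n ! : ℝ) ^ 2 + 2 * x / (n ! * (n + 1)!))
      = 2 * (x ^ (2 * n) * (1 / (n ! : ℝ) ^ 2) + x ^ (2 * n + 1) * (1 / (n ! * (n + 1)!))) := by
        rw [show x * (2 * x - x) = x ^ 2 by ring, ← pow_mul]
        ring
    _ = 2 * (expGenTerm (fun n ↦ (middleBinom n : ℝ)) x (2 * n) +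
          expGenTerm (fun n ↦ (middleBinom n : ℝ)) x (2 * n + 1)) := by
        rw [← middleBinom_two_mul_div_factorial, ← middleBinom_two_mul_add_one_div_factorial,
          expGenTerm, expGenTerm, smul_eq_mul, smul_eq_mul]
        ring

theorem integral_expGenFun_middleBinom_mul_sub (s : ℝ) :
    ∫ u in (0 : ℝ)..s, expGenFun (fun n ↦ (middleBinom n : ℝ)) u *
        expGenFun (fun n ↦ (middleBinom n : ℝ)) (s - u) =
      Real.exp (2 * s) - expGenFun (fun n ↦ (middleBinom n : ℝ)) s := by
  have summable_terms := summable_norm_expGenTerm_middleBinom s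
  have hasSum_exp : HasSum (fun n ↦ (2 * s) ^ n / n !) (Real.exp (2 * s)) := by
    rw [Real.exp_eq_exp_ℝ]
    exact NormedSpace.expSeries_div_hasSum_exp (2 * s)
  have hasSum_sub := hasSum_exp.sub summable_terms.of_norm.hasSum
  have hasSum_tail := (hasSum_nat_add_iff' 1).mpr hasSum_sub
  refine (hasSum_integral_expGenFun_mul_expGenFun_sub summable_terms summable_terms).unique ?_
  convert! hasSum_tail using 1
  · funext n
    have convolution : ∑ p ∈ antidiagonal n, (middleBinom p.1 * middleBinom p.2 : ℝ) =
        2 ^ (n + 1) - middleBinom (n + 1) :=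
      eq_sub_of_add_eq (mod_cast sum_antidiagonal_middleBinom_mul_add_middleBinom_succ n)
    rw [convolution, expGenTerm, smul_eq_mul, smul_eq_mul]
    ring
  · simp [expGenFun, expGenTerm, middleBinom]

theorem central_cbinom_convolution_general (s : ℝ) :
    ∫ u in (0 : ℝ)..s, cbinom (2 * u) u * cbinom (2 * (s - u)) (s - u) =
      4 * Real.exp (2 * s) - 2 * cbinom (2 * s) s := by
  simp only [cbinom_two_mul_self, mul_mul_mul_comm (2 : ℝ)]
  rw [intervalIntegral.integral_const_mul, integral_expGenFun_middleBinom_mul_sub]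
  ring

theorem central_cbinom_convolution (s : ℝ) (hs : 0 ≤ s) :
    (∫ u in (0 : ℝ)..s, cbinom (2 * u) u * cbinom (2 * (s - u)) (s - u)) =
      4 * Real.exp (2 * s) - 2 * cbinom (2 * s) s :=
  central_cbinom_convolution_general s
end
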